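/- arXiv:1802.08964 — 3 statements merged into one kernel-verified Lean document; each statement's English description precedes it below -/
import Mathlib

section
/- Let Q, N ≥ 1 be real numbers and let S be a finite multiset of elements of ℤ[i] \ {0}. For i = 1, 2 let Φ_i : ℝ → ℝ_{>0} be smooth functions of rapid decay with Φ_i(x) ≥ c > 0 whenever |x| ≤ 1, and set Ψ_i(z) := Φ_i(N(z)) for z ∈ ℂ. Define K := max over q1 ∈ S with Q/2 < N(q1) ≤ Q and reduced residues r1 mod q1 of the number of pairs (r2, q2) with q2 ∈ S, Q/2 < N(q2) ≤ Q, r2 a reduced residue mod q2, and N(r1 q2 − r2 q1) ≤ 2 N^{−1} N(q1) N(q2). Then K ≤ C · max_{q1∈S, Q/2<N(q1)≤Q, (r1,q1)=1} ∑_{q2∈S} Ψ_2(q2/√Q) · ∑_{b∈ℤ[i], b ≡ r1 q2 (mod q1)} Ψ_1(b√N/(|q1|√(2Q))), where C depends only on Φ_1, Φ_2 and c. -/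
noncomputable section

open scoped Classical

/-- The norm of a Gaussian integer, as a real number. -/
def gN (z : GaussianInt) : ℝ := (z.re : ℝ) ^ 2 + (z.im : ℝ) ^ 2

/-- The norm form on `ℂ`: `N(z) = (Re z)² + (Im z)²`. -/
def cN (z : ℂ) : ℝ := z.re ^ 2 + z.im ^ 2

theorem gi_finite (q : GaussianInt) (hq : q ≠ 0) :
    Finite (GaussianInt ⧸ Ideal.span {q}) := by
  have hf : Module.Finite ℤ GaussianInt := by
    refine ⟨⟨{1, ⟨0, 1⟩}, ?_⟩⟩
    rw [eq_top_iff]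
    rintro ⟨a, b⟩ -
    have : (⟨a, b⟩ : GaussianInt) = a • (1 : GaussianInt) + b • (⟨0, 1⟩ : GaussianInt) := by
      ext <;> simp
    rw [this]
    refine Submodule.add_mem _ (Submodule.smul_mem _ _ (Submodule.subset_span (by simp)))
      (Submodule.smul_mem _ _ (Submodule.subset_span (by simp)))
  have : Ring.HasFiniteQuotients GaussianInt := Ring.HasFiniteQuotients.of_module_finite ℤ _
  exact Ring.HasFiniteQuotients.finiteQuotient (by simpa using hq)

theorem gN_pos (q : GaussianInt) (hq : q ≠ 0) : 0 < gN q := by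
  by_contra h
  unfold gN at h
  apply hq
  have h1 : (q.re : ℝ) ^ 2 = 0 := by nlinarith [sq_nonneg (q.re : ℝ), sq_nonneg (q.im : ℝ)]
  have h2 : (q.im : ℝ) ^ 2 = 0 := by nlinarith [sq_nonneg (q.re : ℝ), sq_nonneg (q.im : ℝ)]
  ext
  · exact_mod_cast pow_eq_zero_iff (two_ne_zero) |>.1 h1
  · exact_mod_cast pow_eq_zero_iff (two_ne_zero) |>.1 h2

theorem cN_div (q : GaussianInt) (Q : ℝ) (hQ : 0 < Q) :
    cN ((q : ℂ) / (Real.sqrt Q : ℝ)) = gN q / Q := by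
  have h : Real.sqrt Q ^ 2 = Q := Real.sq_sqrt hQ.le
  unfold cN gN
  rw [Complex.div_ofReal_re, Complex.div_ofReal_im, div_pow, div_pow, h, GaussianInt.toComplex_def]
  simp
  ring

theorem cN_arg (b : GaussianInt) (N G Q : ℝ) (hN : 0 < N) (hG : 0 < G) (hQ : 0 < Q) :
    cN ((b : ℂ) * (Real.sqrt N : ℝ) / ((Real.sqrt G : ℝ) * (Real.sqrt (2 * Q) : ℝ)))
      = gN b * (N / (G * (2 * Q))) := by
  have h1 : Real.sqrt N ^ 2 = N := Real.sq_sqrt hN.le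
  have h2 : Real.sqrt G ^ 2 = G := Real.sq_sqrt hG.le
  have h3 : Real.sqrt (2 * Q) ^ 2 = 2 * Q := Real.sq_sqrt (by positivity)
  unfold cN gN
  rw [← Complex.ofReal_mul, Complex.div_ofReal_re, Complex.div_ofReal_im, div_pow, div_pow,
    Complex.re_mul_ofReal, Complex.im_mul_ofReal, mul_pow, mul_pow, mul_pow, h1, h2, h3,
    GaussianInt.toComplex_def]
  simp
  ring

theorem gi_summable (Φ : ℝ → ℝ) (hpos : ∀ x, 0 < Φ x)
    (h : ∃ C' > (1 : ℝ), ∃ A : ℝ, ∀ x : ℝ, Φ x ≤ A * (1 + |x|) ^ (-C')) (t : ℝ) (ht : 0 < t) :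
    Summable (fun b : GaussianInt => Φ (gN b * t)) := by
  obtain ⟨C', hC, A, hA⟩ := h
  have hA0 : 0 < A := by
    have := (hpos 0).trans_le (hA 0)
    simpa using this
  let e : GaussianInt → (Fin 2 → ℤ) := fun b => ![b.re, b.im]
  have he : Function.Injective e := by
    intro x y hxy
    have h0 := congrFun hxy 0
    have h1 := congrFun hxy 1
    simp [e] at h0 h1
    ext <;> assumption
  have hs : Summable (fun b : GaussianInt => A * t ^ (-C') * ‖e b‖ ^ (-(2 * C'))) :=
    ((EisensteinSeries.summable_one_div_norm_rpow (k := 2 * C') (by linarith)).comp_injective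
      he).mul_left _
  refine Summable.of_norm_bounded_eventually hs ?_
  have : ∀ᶠ b : GaussianInt in Filter.cofinite, b ≠ 0 := by
    simp [Filter.eventually_cofinite]
  filter_upwards [this] with b hb
  have hg := gN_pos b hb
  have hen : 0 < ‖e b‖ := by
    rw [norm_pos_iff]
    intro h0
    apply hb
    apply he
    rw [h0]
    ext i
    fin_cases i <;> simp [e]
  have hle : ‖e b‖ ^ 2 ≤ gN b := by
    have h0 : ‖e b‖ ≤ Real.sqrt (gN b) := by
      rw [pi_norm_le_iff_of_nonneg (Real.sqrt_nonneg _)]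
      intro i
      apply Real.le_sqrt_of_sq_le
      fin_cases i
      · simp [e, gN, Int.norm_eq_abs]; positivity
      · simp [e, gN, Int.norm_eq_abs]; positivity
    calc ‖e b‖ ^ 2 ≤ Real.sqrt (gN b) ^ 2 := by gcongr
      _ = gN b := Real.sq_sqrt hg.le
  rw [Real.norm_of_nonneg (hpos _).le]
  refine (hA _).trans ?_
  rw [mul_assoc]
  refine mul_le_mul_of_nonneg_left ?_ hA0.le
  have h2 : ‖e b‖ ^ (-(2 * C')) = (‖e b‖ ^ 2) ^ (-C') := by
    rw [← Real.rpow_natCast, ← Real.rpow_mul hen.le]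
    congr 1
    push_cast
    ring
  rw [h2, ← Real.mul_rpow ht.le (by positivity)]
  apply Real.rpow_le_rpow_of_nonpos (by positivity)
  · rw [abs_of_pos (by positivity)]
    nlinarith
  · linarith

/-- **Bounding the counting quantity by smoothed sums** (inequality (14)/(15) of the paper).
For smooth, positive, rapidly decaying `Φ₁, Φ₂ : ℝ → ℝ` with `Φᵢ ≥ c > 0` on `[-1,1]`,
setting `Ψᵢ = Φᵢ ∘ N`, there is `C = C(Φ₁,Φ₂,c) > 0` such that for all `Q, N ≥ 1`, every
finite multiset `S` of nonzero Gaussian integers, and any fixed system of representatives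
of reduced residues (given by `rep`): the counting quantity `K` satisfies
`K ≤ C · max_{q₁,r₁} ∑_{q₂∈S} Ψ₂(q₂/√Q) ∑_{b ≡ r₁q₂ (q₁)} Ψ₁(b√N/(|q₁|√(2Q)))`. -/
theorem counting_bounded_by_smoothed_sums :
    ∀ (Φ₁ Φ₂ : ℝ → ℝ) (c : ℝ), 0 < c →
      (∀ x, 0 < Φ₁ x) → (∀ x, 0 < Φ₂ x) →
      ContDiff ℝ (⊤ : ℕ∞) Φ₁ → ContDiff ℝ (⊤ : ℕ∞) Φ₂ →
      (∃ C' > (1 : ℝ), ∃ A : ℝ, ∀ x : ℝ, Φ₁ x ≤ A * (1 + |x|) ^ (-C')) →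
      (∃ C' > (1 : ℝ), ∃ A : ℝ, ∀ x : ℝ, Φ₂ x ≤ A * (1 + |x|) ^ (-C')) →
      (∀ x : ℝ, |x| ≤ 1 → c ≤ Φ₁ x) → (∀ x : ℝ, |x| ≤ 1 → c ≤ Φ₂ x) →
      ∃ C : ℝ, 0 < C ∧
        ∀ (Q N : ℝ), 1 ≤ Q → 1 ≤ N →
        ∀ S : Multiset GaussianInt, (∀ q ∈ S, q ≠ 0) →
        ∀ rep : (q : GaussianInt) → (GaussianInt ⧸ Ideal.span {q})ˣ → GaussianInt,
        (∀ (q : GaussianInt) (u : (GaussianInt ⧸ Ideal.span {q})ˣ),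
          Ideal.Quotient.mk (Ideal.span {q}) (rep q u) = (u : GaussianInt ⧸ Ideal.span {q})) →
        ∀ K : ℕ,
        K = sSup {m : ℕ | ∃ q1 ∈ S, (Q / 2 < gN q1 ∧ gN q1 ≤ Q) ∧
              ∃ u1 : (GaussianInt ⧸ Ideal.span {q1})ˣ,
                m = ((S.filter (fun q2 => Q / 2 < gN q2 ∧ gN q2 ≤ Q)).map
                      (fun q2 => Nat.card {u2 : (GaussianInt ⧸ Ideal.span {q2})ˣ //
                        gN (rep q1 u1 * q2 - rep q2 u2 * q1)
                          ≤ 2 * N⁻¹ * gN q1 * gN q2})).sum} →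
        (K : ℝ) ≤ C * sSup {v : ℝ | ∃ q1 ∈ S, (Q / 2 < gN q1 ∧ gN q1 ≤ Q) ∧
              ∃ u1 : (GaussianInt ⧸ Ideal.span {q1})ˣ,
                v = (S.map (fun q2 : GaussianInt =>
                      Φ₂ (cN ((q2 : ℂ) / (Real.sqrt Q : ℝ))) *
                      ∑' b : {b : GaussianInt // q1 ∣ b - rep q1 u1 * q2},
                        Φ₁ (cN (((b : GaussianInt) : ℂ) * (Real.sqrt N : ℝ)
                          / ((Real.sqrt (gN q1) : ℝ) * (Real.sqrt (2 * Q) : ℝ)))))).sum} := by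
  intro Φ₁ Φ₂ c hc hp1 hp2 _ _ hd1 _ hc1 hc2
  refine ⟨(c * c)⁻¹, by positivity, ?_⟩
  intro Q N hQ hN S hS rep hrep K hK
  have hQ0 : 0 < Q := by linarith
  have hN0 : 0 < N := by linarith
  set V : Set ℝ := {v : ℝ | ∃ q1 ∈ S, (Q / 2 < gN q1 ∧ gN q1 ≤ Q) ∧
              ∃ u1 : (GaussianInt ⧸ Ideal.span {q1})ˣ,
                v = (S.map (fun q2 : GaussianInt =>
                      Φ₂ (cN ((q2 : ℂ) / (Real.sqrt Q : ℝ))) *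
                      ∑' b : {b : GaussianInt // q1 ∣ b - rep q1 u1 * q2},
                        Φ₁ (cN (((b : GaussianInt) : ℂ) * (Real.sqrt N : ℝ)
                          / ((Real.sqrt (gN q1) : ℝ) * (Real.sqrt (2 * Q) : ℝ)))))).sum} with hV
  have hV0 : ∀ v ∈ V, 0 ≤ v := by
    rintro v ⟨q1, _, _, u1, rfl⟩
    apply Multiset.sum_nonneg
    intro x hx
    obtain ⟨q2, _, rfl⟩ := Multiset.mem_map.1 hx
    exact mul_nonneg (hp2 _).le (tsum_nonneg fun _ => (hp1 _).le)
  have hVf : V.Finite := by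
    have : V ⊆ ⋃ q1 ∈ (S.toFinset : Set GaussianInt), Set.range
        (fun u1 : (GaussianInt ⧸ Ideal.span {q1})ˣ => (S.map (fun q2 : GaussianInt =>
                      Φ₂ (cN ((q2 : ℂ) / (Real.sqrt Q : ℝ))) *
                      ∑' b : {b : GaussianInt // q1 ∣ b - rep q1 u1 * q2},
                        Φ₁ (cN (((b : GaussianInt) : ℂ) * (Real.sqrt N : ℝ)
                          / ((Real.sqrt (gN q1) : ℝ) * (Real.sqrt (2 * Q) : ℝ)))))).sum) := by
      rintro v ⟨q1, hq1, _, u1, rfl⟩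
      simp only [Set.mem_iUnion]
      exact ⟨q1, by simpa using hq1, u1, rfl⟩
    refine Set.Finite.subset (Set.Finite.biUnion (Finset.finite_toSet _) ?_) this
    intro q1 hq1
    have := gi_finite q1 (hS q1 (by simpa using hq1))
    exact Set.finite_range _
  have hR0 : 0 ≤ (c * c)⁻¹ * sSup V := mul_nonneg (by positivity) (Real.sSup_nonneg hV0)
  have hK' : K = 0 ∨ ∃ q1 ∈ S, (Q / 2 < gN q1 ∧ gN q1 ≤ Q) ∧
              ∃ u1 : (GaussianInt ⧸ Ideal.span {q1})ˣ,
                K = ((S.filter (fun q2 => Q / 2 < gN q2 ∧ gN q2 ≤ Q)).map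
                      (fun q2 => Nat.card {u2 : (GaussianInt ⧸ Ideal.span {q2})ˣ //
                        gN (rep q1 u1 * q2 - rep q2 u2 * q1)
                          ≤ 2 * N⁻¹ * gN q1 * gN q2})).sum := by
    by_cases hK0 : K = 0
    · exact Or.inl hK0
    right
    generalize hM : {m : ℕ | _} = M at hK
    have hmem : K ∈ M := by
      rw [hK]
      apply Nat.sSup_mem
      · by_contra hne
        rw [Set.not_nonempty_iff_eq_empty] at hne
        apply hK0
        rw [hK, hne]
        simp
      · by_contra hb
        exact hK0 (hK.trans (Nat.sSup_of_not_bddAbove hb))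
    rw [← hM] at hmem
    exact hmem
  rcases hK' with h0 | ⟨q1, hq1, hq1Q, u1, hKe⟩
  · rw [h0]
    simpa using hR0
  have hg1 := gN_pos q1 (hS q1 hq1)
  have hle := le_csSup hVf.bddAbove (show _ ∈ V from ⟨q1, hq1, hq1Q, u1, rfl⟩)
  rw [inv_mul_eq_div, le_div_iff₀ (by positivity)]
  refine le_trans ?_ hle
  rw [hKe]
  have hfil : ∀ f : GaussianInt → ℝ, (∀ q, 0 ≤ f q) →
      ((S.filter (fun q2 => Q / 2 < gN q2 ∧ gN q2 ≤ Q)).map f).sum ≤ (S.map f).sum := by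
    intro f hf
    conv_rhs => rw [← Multiset.filter_add_not (fun q2 => Q / 2 < gN q2 ∧ gN q2 ≤ Q) S]
    rw [Multiset.map_add, Multiset.sum_add]
    have : 0 ≤ ((S.filter (fun q2 => ¬ (Q / 2 < gN q2 ∧ gN q2 ≤ Q))).map f).sum := by
      apply Multiset.sum_nonneg
      intro x hx
      obtain ⟨q2, _, rfl⟩ := Multiset.mem_map.1 hx
      exact hf _
    linarith
  refine le_trans ?_ (hfil _ (fun q => mul_nonneg (hp2 _).le (tsum_nonneg fun _ => (hp1 _).le)))
  rw [Nat.cast_multiset_sum, Multiset.map_map, ← Multiset.sum_map_mul_right]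
  apply Multiset.sum_map_le_sum_map
  intro q2 hq2
  rw [Multiset.mem_filter] at hq2
  obtain ⟨hq2S, _, hq2Q⟩ := hq2
  have hg2 := gN_pos q2 (hS q2 hq2S)
  have hfin := gi_finite q2 (hS q2 hq2S)
  simp only [cN_div _ _ hQ0, cN_arg _ _ _ _ hN0 hg1 hQ0, Function.comp]
  set t : ℝ := N / (gN q1 * (2 * Q)) with ht
  have ht0 : 0 < t := by positivity
  have hsum : Summable (fun b : {b : GaussianInt // q1 ∣ b - rep q1 u1 * q2} =>
      Φ₁ (gN b.1 * t)) :=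
    (gi_summable Φ₁ hp1 hd1 t ht0).comp_injective Subtype.val_injective
  have hP2 : c ≤ Φ₂ (gN q2 / Q) := by
    apply hc2
    rw [abs_of_pos (by positivity), div_le_one hQ0]
    exact hq2Q
  let U := {u2 : (GaussianInt ⧸ Ideal.span {q2})ˣ //
                        gN (rep q1 u1 * q2 - rep q2 u2 * q1)
                          ≤ 2 * N⁻¹ * gN q1 * gN q2}
  have : Fintype U := Fintype.ofFinite U
  let F : U → {b : GaussianInt // q1 ∣ b - rep q1 u1 * q2} := fun u =>
    ⟨rep q1 u1 * q2 - rep q2 u.1 * q1, ⟨- rep q2 u.1, by ring⟩⟩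
  have hF : Function.Injective F := by
    intro u v huv
    have h1 : rep q1 u1 * q2 - rep q2 u.1 * q1 = rep q1 u1 * q2 - rep q2 v.1 * q1 :=
      congrArg Subtype.val huv
    have h2 : rep q2 u.1 = rep q2 v.1 := by
      apply mul_right_cancel₀ (hS q1 hq1)
      linear_combination -h1
    apply Subtype.ext
    apply Units.ext
    rw [← hrep, ← hrep, h2]
  have hcount : (Nat.card U : ℝ) * c ≤
      ∑' b : {b : GaussianInt // q1 ∣ b - rep q1 u1 * q2}, Φ₁ (gN b.1 * t) := by
    have h1 := Summable.sum_le_tsum (Finset.univ.map ⟨F, hF⟩)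
      (fun b _ => (hp1 (gN b.1 * t)).le) hsum
    refine le_trans ?_ h1
    rw [Finset.sum_map, Nat.card_eq_fintype_card, ← Finset.card_univ, ← nsmul_eq_mul]
    apply Finset.card_nsmul_le_sum
    intro u _
    apply hc1
    have hu := u.2
    have hnn : 0 ≤ gN (F u).1 := by unfold gN; positivity
    show |gN (F u).1 * t| ≤ 1
    rw [abs_of_nonneg (by positivity)]
    have hu' : gN (F u).1 ≤ 2 * N⁻¹ * gN q1 * Q :=
      le_trans hu (by gcongr)
    calc gN (F u).1 * t ≤ (2 * N⁻¹ * gN q1 * Q) * t := by gcongr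
      _ = 1 := by rw [ht]; field_simp
  calc (Nat.card U : ℝ) * (c * c) = c * ((Nat.card U : ℝ) * c) := by ring
    _ ≤ _ := mul_le_mul hP2 hcount (by positivity) (hp2 _).le
end
end

section
/- Let d ≥ 1, let N ∈ ℕ with N ≥ 1, and define φ : ℝ^d → ℝ by φ(x) := ∏_{k=1}^d (sin(π x_k)/(2 x_k))², with the factor interpreted as (π/2)² when x_k = 0. Then for every y ∈ ℝ^d, ∑_{n∈ℤ^d} φ(n/(2N^{1/d})) · e(n·y) = (π^{2d}/2^d) · N · ∏_{k=1}^d max{1 − 2N^{1/d}·‖y_k‖, 0}, where ‖u‖ denotes the distance from u ∈ ℝ to the nearest integer. -/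
noncomputable section

/-- `e(t) = exp(2πit)`. -/
def e (t : ℝ) : ℂ := Complex.exp (2 * Real.pi * Complex.I * t)

/-- The Fejér-type factor `(sin(πt)/(2t))²`, interpreted as its limit `(π/2)²` at `t = 0`. -/
def fej (t : ℝ) : ℝ := if t = 0 then (Real.pi / 2) ^ 2 else (Real.sin (Real.pi * t) / (2 * t)) ^ 2

/-- The function `φ(x) = ∏_{k=1}^d (sin(π x_k)/(2 x_k))²` on `ℝ^d`. -/
def phi {d : ℕ} (x : Fin d → ℝ) : ℝ := ∏ k, fej (x k)

/-- The distance from a real number to the nearest integer. -/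
def distInt (u : ℝ) : ℝ := |u - round u|

lemma e_add (s t : ℝ) : e (s + t) = e s * e t := by
  simp only [e, ← Complex.exp_add]; congr 1; push_cast; ring

lemma e_int (m : ℤ) : e (m : ℝ) = 1 := by
  have h := Complex.exp_int_mul_two_pi_mul_I m
  rw [← h, e]; congr 1; push_cast; ring

lemma e_sum {d : ℕ} (g : Fin d → ℝ) : e (∑ k, g k) = ∏ k, e (g k) := by
  simp only [e, ← Complex.exp_sum]; congr 1; push_cast; rw [Finset.mul_sum]

lemma bern_aux (x : ℝ) (hx : |x| ≤ 1) :
    HasSum (fun n : ℤ => 1 / (n : ℂ) ^ 2 * e (n * x))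
      ((2 * Real.pi ^ 2 * (x ^ 2 - |x| + 1 / 6) : ℝ) : ℂ) := by
  have key : ∀ x : ℝ, x ∈ Set.Icc (0 : ℝ) 1 → HasSum (fun n : ℤ => 1 / (n : ℂ) ^ 2 * e (n * x))
      ((2 * Real.pi ^ 2 * (x ^ 2 - x + 1 / 6) : ℝ) : ℂ) := by
    intro x hx
    have h := hasSum_one_div_pow_mul_fourier_mul_bernoulliFun (le_refl 2) hx
    convert! h using 1
    · ext n
      rw [fourier_coe_apply, e]
      congr 2
      push_cast; ring
    · rw [bernoulliFun_two]
      have : (Nat.factorial 2 : ℂ) = 2 := by norm_num [Nat.factorial]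
      rw [this]
      push_cast
      rw [mul_pow, Complex.I_sq]; ring
  rcases le_total 0 x with h0 | h0
  · rw [abs_of_nonneg h0] at hx ⊢
    exact key x ⟨h0, hx⟩
  · rw [abs_of_nonpos h0] at hx ⊢
    have h := key (-x) ⟨by linarith, hx⟩
    rw [← (Equiv.neg ℤ).hasSum_iff] at h
    convert! h using 1
    · ext n
      simp
    · norm_num

lemma one_dim (M : ℝ) (hM : 1 ≤ M) (y : ℝ) :
    HasSum (fun n : ℤ => (fej ((n : ℝ) / (2 * M)) : ℂ) * e (n * y))
      ((Real.pi ^ 2 / 2 * M * max (1 - 2 * M * distInt y) 0 : ℝ) : ℂ) := by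
  set r : ℝ := y - round y with hr
  have hr2 : |r| ≤ 1 / 2 := abs_sub_round y
  set a : ℝ := 1 / (2 * M) with ha
  have ha0 : 0 < a := by positivity
  have ha1 : a ≤ 1 / 2 := by
    rw [ha, div_le_div_iff₀ (by positivity) (by norm_num)]; linarith
  have haM : M * a = 1 / 2 := by rw [ha]; field_simp
  have hey : ∀ n : ℤ, e (n * y) = e (n * r) := by
    intro n
    have : (n : ℝ) * y = n * r + ((n * round y : ℤ) : ℝ) := by rw [hr]; push_cast; ring
    rw [this, e_add, e_int, mul_one]
  obtain ⟨hr3, hr4⟩ := abs_le.1 hr2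
  have h1 := bern_aux r (by linarith)
  have h2 := bern_aux (r + a) (abs_le.2 ⟨by linarith, by linarith⟩)
  have h3 := bern_aux (r - a) (abs_le.2 ⟨by linarith, by linarith⟩)
  have h4 := hasSum_ite_eq (0 : ℤ) (((Real.pi / 2) ^ 2 : ℝ) : ℂ)
  have h5 := h4.add ((h1.mul_left ((M : ℂ) ^ 2 / 2)).sub
    ((h2.add h3).mul_left ((M : ℂ) ^ 2 / 4)))
  convert! h5 using 1
  · ext n
    rw [hey]
    by_cases hn : n = 0
    · subst hn; simp [fej, e]
    · have hn' : (n : ℝ) ≠ 0 := by exact_mod_cast hn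
      have hM0 : M ≠ 0 := by positivity
      have hnc : (n : ℂ) ≠ 0 := by exact_mod_cast hn
      rw [if_neg hn, fej, if_neg (by positivity)]
      have e1 : (n : ℝ) * (r + a) = n * r + n * a := by ring
      have e2 : (n : ℝ) * (r - a) = n * r + -(n * a) := by ring
      rw [e1, e2, e_add, e_add]
      have hc : e (n * a) + e (-(n * a)) =
          ((2 - 4 * Real.sin (Real.pi * (n / (2 * M))) ^ 2 : ℝ) : ℂ) := by
        have h7 : Real.cos (2 * (Real.pi * (n / (2 * M)))) =
          1 - 2 * Real.sin (Real.pi * (n / (2 * M))) ^ 2 := by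
          rw [Real.cos_two_mul, Real.cos_sq']; ring
        have h8 : (2 - 4 * Real.sin (Real.pi * (n / (2 * M))) ^ 2 : ℝ) =
          2 * Real.cos (2 * (Real.pi * (n / (2 * M)))) := by rw [h7]; ring
        rw [h8]
        push_cast
        rw [Complex.two_cos]
        simp only [e]
        congr 2 <;> (rw [ha]; push_cast; ring)
      have h6 : (1 / (n : ℂ) ^ 2 * (e (n * r) * e (n * a)) + 1 / (n : ℂ) ^ 2 * (e (n * r) * e (-(n * a))))
        = 1 / (n : ℂ) ^ 2 * e (n * r) * (e (n * a) + e (-(n * a))) := by ring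
      rw [h6, hc]
      have hMc : (M : ℂ) ≠ 0 := by exact_mod_cast hM0
      push_cast
      field_simp
      ring
  · have hd : distInt y = |r| := rfl
    rw [hd]
    norm_cast
    have hmax : |r + a| + |r - a| = 2 * (|r| + max (a - |r|) 0) := by
      rcases le_total 0 r with h | h <;> rcases le_total a |r| with h' | h'
      all_goals first | rw [max_eq_right (by linarith)] | rw [max_eq_left (by linarith)]
      all_goals first | rw [abs_of_nonneg h] at * | rw [abs_of_nonpos h] at *
      all_goals first | rw [abs_of_nonneg (show 0 ≤ r + a by linarith)] | rw [abs_of_nonpos (show r + a ≤ 0 by linarith)]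
      all_goals first | rw [abs_of_nonneg (show 0 ≤ r - a by linarith)] | rw [abs_of_nonpos (show r - a ≤ 0 by linarith)]
      all_goals ring
    have hm2 : max (1 - 2 * M * |r|) 0 = 2 * M * max (a - |r|) 0 := by
      rw [mul_max_of_nonneg _ _ (by positivity)]
      congr 1
      · linear_combination -2 * haM
      · ring
    rw [hm2]
    have hma2 : M ^ 2 * a ^ 2 = 1 / 4 := by
      linear_combination (M * a + 1 / 2) * haM
    push_cast
    linear_combination (-Real.pi ^ 2 * M ^ 2 / 2) * hmax + Real.pi ^ 2 * hma2

lemma mul_aux {α β : Type} (f : α → ℂ) (g : β → ℂ) (s t : ℂ) (hf : HasSum f s)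
    (hg : HasSum g t) : HasSum (fun x : α × β => f x.1 * g x.2) (s * t) := by
  have hn0 : Summable (fun m => ‖f m‖) := summable_norm_iff.2 hf.summable
  have hn1 : Summable (fun m => ‖g m‖) := summable_norm_iff.2 hg.summable
  exact HasSum.mul hf hg (summable_mul_of_summable_norm hn0 hn1)

lemma pi_prod (d : ℕ) (f : Fin d → ℤ → ℂ) (s : Fin d → ℂ) (h : ∀ k, HasSum (f k) (s k)) :
    HasSum (fun n : Fin d → ℤ => ∏ k, f k (n k)) (∏ k, s k) := by
  induction d with
  | zero =>
    have := hasSum_unique (fun n : Fin 0 → ℤ => ∏ k, f k (n k))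
    simpa using this
  | succ d ih =>
    have h1 := ih (fun k => f k.succ) (fun k => s k.succ) (fun k => h k.succ)
    have h0 := h 0
    have h2 := mul_aux _ _ _ _ h0 h1
    rw [Fin.prod_univ_succ, ← (Fin.consEquiv (fun _ => ℤ)).hasSum_iff]
    convert! h2 using 1
    ext ⟨m, n⟩
    simp [Fin.prod_univ_succ, Fin.consEquiv]

/-- **Evaluation of the smoothed exponential sum `V(y)`** (Section 3 of the paper).
For every `y ∈ ℝ^d`,
`∑_{n ∈ ℤ^d} φ(n/(2N^{1/d})) e(n·y) = (π^{2d}/2^d) N ∏_k max{1 - 2N^{1/d}‖y_k‖, 0}`,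
where `‖u‖` is the distance from `u` to the nearest integer. -/
theorem smoothed_exponential_sum_eval (d : ℕ) (hd : 1 ≤ d) (N : ℕ) (hN : 1 ≤ N)
    (y : Fin d → ℝ) :
    ∑' n : Fin d → ℤ,
        (phi (fun k => (n k : ℝ) / (2 * (N : ℝ) ^ ((1 : ℝ) / d))) : ℂ)
          * e (∑ k, (n k : ℝ) * y k)
      = (((Real.pi ^ (2 * d) / 2 ^ d) * N *
          ∏ k, max (1 - 2 * (N : ℝ) ^ ((1 : ℝ) / d) * distInt (y k)) 0 : ℝ) : ℂ) := by
  have hM : (1 : ℝ) ≤ (N : ℝ) ^ ((1 : ℝ) / d) :=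
    Real.one_le_rpow (by exact_mod_cast hN) (by positivity)
  have hMd : ((N : ℝ) ^ ((1 : ℝ) / d)) ^ d = N := by
    rw [one_div]; exact Real.rpow_inv_natCast_pow (by positivity) (by omega)
  generalize (N : ℝ) ^ ((1 : ℝ) / d) = M at hM hMd
  have h := (pi_prod d _ _ (fun k => one_dim M hM (y k))).tsum_eq
  convert! h using 1
  · congr 1
    ext n
    rw [e_sum, phi, Complex.ofReal_prod, Finset.prod_mul_distrib]
  · rw [← Complex.ofReal_prod, Finset.prod_mul_distrib, ← hMd]
    congr 2
    simp [mul_pow, div_pow, pow_mul]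
end
end

section
/- Let Q0 > 0, let q1 ∈ ℤ[i] \ {0}, and let r1, j ∈ ℤ[i]. Set S(q1,r1,j) := ∑_{q∈ℤ[i]} exp(−π N(q)/(2Q0)) · e(Re(j r1 q² / q1²)). Then |S(q1,r1,j)|² ≤ Q0 · ∑_{α∈ℤ[i]} exp(−π N(α)/(4Q0)) · ∑_{β∈ℤ[i]} exp(−π Q0 · N(β − conj(2 j α r1 / q1²))), where conj denotes complex conjugation. -/
noncomputable section

/-- The smoothed quadratic Gauss-type sum
`S(q₁,r₁,j) = ∑_{q ∈ ℤ[i]} exp(-π N(q)/(2Q₀)) e(Re(j r₁ q²/q₁²))`. -/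
def Ssum (Q0 : ℝ) (q1 r1 j : GaussianInt) : ℂ :=
  ∑' q : GaussianInt,
    ((Real.exp (-Real.pi * gN q / (2 * Q0)) : ℝ) : ℂ)
      * e (((j : ℂ) * (r1 : ℂ) * (q : ℂ) ^ 2 / (q1 : ℂ) ^ 2).re)

open Complex in
lemma summable_gauss0 (a : ℝ) (ha : 0 < a) : Summable fun n : ℤ => Real.exp (-a * (n:ℝ)^2) := by
  have h := ((summable_jacobiTheta₂_term_iff 0 (I * ((a / Real.pi : ℝ) : ℂ))).mpr (by
    simpa using div_pos ha Real.pi_pos)).norm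
  refine h.congr fun n => ?_
  rw [jacobiTheta₂_term, Complex.norm_exp, mul_zero, zero_add]
  congr 1
  have : (Real.pi : ℂ) * I * (n:ℂ)^2 * (I * ((a / Real.pi : ℝ) : ℂ)) = ((-a * (n:ℝ)^2 : ℝ) : ℂ) := by
    have := Real.pi_ne_zero
    have h2 : (Real.pi : ℂ) ≠ 0 := by exact_mod_cast this
    push_cast
    field_simp
    rw [I_sq]; ring
  rw [this, ofReal_re]

lemma summable_gauss (a : ℝ) (ha : 0 < a) (s : ℝ) :
    Summable fun n : ℤ => Real.exp (-a * ((n:ℝ) - s)^2) := by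
  refine Summable.of_nonneg_of_le (fun n => (Real.exp_pos _).le) (fun n => ?_)
    ((summable_gauss0 (a/2) (by linarith)).mul_left (Real.exp (a * s^2)))
  rw [← Real.exp_add]
  apply Real.exp_le_exp.mpr
  nlinarith [mul_nonneg ha.le (sq_nonneg ((n:ℝ) - 2 * s))]

/-- shifted term -/
def Hterm (Q x t : ℝ) (n : ℤ) : ℂ :=
  ((Real.exp (-Real.pi * (2 * n + x)^2 / (4 * Q)) : ℝ) : ℂ) *
    Complex.exp (Real.pi * Complex.I * t * (2 * n + x))

lemma Hterm_norm (Q x t : ℝ) (n : ℤ) :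
    ‖Hterm Q x t n‖ = Real.exp (-Real.pi * (2 * n + x)^2 / (4 * Q)) := by
  unfold Hterm
  rw [norm_mul, Complex.norm_real, Real.norm_of_nonneg (Real.exp_pos _).le]
  have : (Real.pi : ℂ) * Complex.I * t * (2 * n + x) =
    ((Real.pi * t * (2 * n + x) : ℝ) : ℂ) * Complex.I := by push_cast; ring
  rw [this, Complex.norm_exp_ofReal_mul_I, mul_one]

lemma Hterm_summable (Q x t : ℝ) (hQ : 0 < Q) : Summable fun n => ‖Hterm Q x t n‖ := by
  refine (summable_gauss (Real.pi / Q) (by positivity) (-x/2)).congr fun n => ?_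
  rw [Hterm_norm]
  congr 1
  field_simp
  ring

open Complex in
lemma Hterm_poisson (Q x t : ℝ) (hQ : 0 < Q) :
    ∑' n, Hterm Q x t n = (Real.sqrt Q : ℂ) * ∑' n : ℤ,
      (cexp (-Real.pi * Q * (n - t)^2) * cexp (Real.pi * I * x * n)) := by
  have hQ' : (Q : ℂ) ≠ 0 := by exact_mod_cast hQ.ne'
  have h := Complex.tsum_exp_neg_quadratic (a := ((1 / Q : ℝ) : ℂ))
    (by rw [ofReal_re]; positivity) (I * t - x / (2 * Q))
  have e1 : ∀ n, Hterm Q x t n = cexp (-Real.pi * x^2/(4*Q) + Real.pi * I * t * x) *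
      cexp (-Real.pi * ((1 / Q : ℝ) : ℂ) * n ^ 2 + 2 * Real.pi * (I * t - x / (2 * Q)) * n) := by
    intro n
    unfold Hterm
    rw [ofReal_exp, ← Complex.exp_add, ← Complex.exp_add]
    congr 1
    push_cast
    field_simp
    ring
  have e2 : ∀ n : ℤ, cexp (-Real.pi * Q * (n - t)^2) * cexp (Real.pi * I * x * n) =
      cexp (-Real.pi * x^2/(4*Q) + Real.pi * I * t * x) *
      cexp (-Real.pi / ((1 / Q : ℝ) : ℂ) * (n + I * (I * t - x / (2 * Q))) ^ 2) := by
    intro n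
    rw [← Complex.exp_add, ← Complex.exp_add]
    congr 1
    have : I * (I * t - x / (2 * Q)) = -t - I * (x / (2 * Q)) := by
      rw [mul_sub, ← mul_assoc, I_mul_I]; ring
    rw [this]
    have h3 : ((n:ℂ) + (-t - I * (x / (2 * Q)))) ^ 2 =
      (n - t)^2 - 2 * I * (n - t) * (x / (2 * Q)) - (x / (2 * Q))^2 := by
      linear_combination (x / (2 * Q) : ℂ)^2 * I_sq
    rw [h3]
    push_cast
    field_simp
    ring
  simp_rw [e1, e2]
  rw [tsum_mul_left, tsum_mul_left, h]
  have : (1 : ℂ) / ((1 / Q : ℝ) : ℂ) ^ (1 / 2 : ℂ) = (Real.sqrt Q : ℂ) := by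
    rw [Real.sqrt_eq_rpow]
    have h4 : ((1 / Q : ℝ) : ℂ) ^ (1 / 2 : ℂ) = (((1 / Q) ^ (1/2 : ℝ) : ℝ) : ℂ) := by
      rw [ofReal_cpow (by positivity)]; norm_num
    rw [h4, one_div Q, Real.inv_rpow hQ.le]
    push_cast
    simp
  rw [this]; ring

open Complex in
lemma term_norm (Q x t : ℝ) (n : ℤ) :
    ‖cexp (-Real.pi * Q * (n - t)^2) * cexp (Real.pi * I * x * n)‖ =
      Real.exp (-(Real.pi * Q) * (n - t)^2) := by
  have h1 : (-Real.pi * Q * (n - t)^2 : ℂ) = ((-(Real.pi * Q) * (n - t)^2 : ℝ) : ℂ) := by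
    push_cast; ring
  have h2 : (Real.pi * I * x * n : ℂ) = ((Real.pi * x * n : ℝ) : ℂ) * I := by
    push_cast; ring
  rw [norm_mul, h1, h2, norm_exp_ofReal_mul_I, mul_one, norm_exp, ofReal_re]

lemma Hterm_bound (Q x t : ℝ) (hQ : 0 < Q) :
    ‖∑' n, Hterm Q x t n‖ ≤ Real.sqrt Q * ∑' n : ℤ, Real.exp (-(Real.pi * Q) * (n - t)^2) := by
  rw [Hterm_poisson Q x t hQ, norm_mul, Complex.norm_real,
    Real.norm_of_nonneg (Real.sqrt_nonneg _)]
  refine mul_le_mul_of_nonneg_left ?_ (Real.sqrt_nonneg _)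
  refine (norm_tsum_le_tsum_norm ?_).trans_eq (tsum_congr fun n => term_norm Q x t n)
  exact (summable_gauss _ (by positivity) t).congr fun n => (term_norm Q x t n).symm

lemma theta_bound (Q : ℝ) (hQ : 0 < Q) : ∃ C : ℝ, ∀ t : ℝ,
    ∑' n : ℤ, Real.exp (-(Real.pi * Q) * (n - t)^2) ≤ C := by
  refine ⟨(Real.sqrt Q)⁻¹ * ∑' n : ℤ, Real.exp (-Real.pi * (2 * n + 0)^2 / (4 * Q)), fun t => ?_⟩
  have hs := Real.sqrt_pos.mpr hQ
  have h := Hterm_poisson Q 0 t hQ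
  have h2 : ∀ n : ℤ, Complex.exp (-Real.pi * Q * (n - t)^2) *
      Complex.exp (Real.pi * Complex.I * (0:ℝ) * n) =
      ((Real.exp (-(Real.pi * Q) * (n - t)^2) : ℝ) : ℂ) := by
    intro n
    push_cast
    simp
  simp_rw [h2] at h
  rw [← Complex.ofReal_tsum, ← Complex.ofReal_mul] at h
  have h3 : Real.sqrt Q * ∑' n : ℤ, Real.exp (-(Real.pi * Q) * (n - t)^2) ≤
      ∑' n : ℤ, Real.exp (-Real.pi * (2 * n + 0)^2 / (4 * Q)) := by
    refine (le_abs_self _).trans ?_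
    rw [← Real.norm_eq_abs, ← Complex.norm_real, ← h]
    refine (norm_tsum_le_tsum_norm (Hterm_summable Q 0 t hQ)).trans_eq ?_
    exact tsum_congr fun n => Hterm_norm Q 0 t n
  rw [inv_mul_eq_div, le_div_iff₀ hs]
  linarith

/-- coordinates -/
def gEquiv : ℤ × ℤ ≃ GaussianInt where
  toFun p := ⟨p.1, p.2⟩
  invFun z := (z.re, z.im)
  left_inv _ := rfl
  right_inv _ := rfl

lemma g_summable {f g : ℤ → ℂ} (hf : Summable fun n => ‖f n‖) (hg : Summable fun n => ‖g n‖) :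
    Summable fun z : GaussianInt => ‖f z.re * g z.im‖ := by
  rw [← gEquiv.summable_iff]
  exact (Summable.mul_norm hf hg)

lemma g_tsum {f g : ℤ → ℂ} (hf : Summable fun n => ‖f n‖) (hg : Summable fun n => ‖g n‖) :
    ∑' z : GaussianInt, f z.re * g z.im = (∑' n, f n) * ∑' n, g n := by
  rw [← gEquiv.tsum_eq, tsum_mul_tsum_of_summable_norm hf hg]
  rfl

lemma g_summableR {f g : ℤ → ℝ} (hf : Summable f) (hg : Summable g) 
    (hf0 : ∀ n, 0 ≤ f n) (hg0 : ∀ n, 0 ≤ g n) :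
    Summable fun z : GaussianInt => f z.re * g z.im := by
  rw [← gEquiv.summable_iff]
  exact (Summable.mul_of_nonneg hf hg hf0 hg0)

lemma g_tsumR {f g : ℤ → ℝ} (hf : Summable f) (hg : Summable g) 
    (hf0 : ∀ n, 0 ≤ f n) (hg0 : ∀ n, 0 ≤ g n) :
    ∑' z : GaussianInt, f z.re * g z.im = (∑' n, f n) * ∑' n, g n := by
  rw [← gEquiv.tsum_eq, hf.tsum_mul_tsum hg (Summable.mul_of_nonneg hf hg hf0 hg0)]
  rfl

lemma gN_summable (a : ℝ) (ha : 0 < a) : Summable fun z : GaussianInt => Real.exp (-a * gN z) := by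
  refine (g_summableR (summable_gauss0 a ha) (summable_gauss0 a ha)
    (fun n => (Real.exp_pos _).le) (fun n => (Real.exp_pos _).le)).congr fun z => ?_
  rw [← Real.exp_add]
  unfold gN; congr 1; ring

lemma inner_eq (Q : ℝ) (hQ : 0 < Q) (w : ℂ) :
    ∑' β : GaussianInt, Real.exp (-Real.pi * Q * cN ((β : ℂ) - (starRingEnd ℂ) w)) =
    (∑' n : ℤ, Real.exp (-(Real.pi * Q) * (n - w.re)^2)) *
      ∑' n : ℤ, Real.exp (-(Real.pi * Q) * (n - (-w.im))^2) := by
  rw [← g_tsumR (summable_gauss _ (by positivity) _) (summable_gauss _ (by positivity) _)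
    (fun n => (Real.exp_pos _).le) (fun n => (Real.exp_pos _).le)]
  refine tsum_congr fun z => ?_
  rw [← Real.exp_add]
  unfold cN; congr 1
  simp
  ring

lemma e_norm (t : ℝ) : ‖e t‖ = 1 := by
  unfold e
  have : (2 * Real.pi * Complex.I * t : ℂ) = ((2 * Real.pi * t : ℝ) : ℂ) * Complex.I := by
    push_cast; ring
  rw [this, Complex.norm_exp_ofReal_mul_I]

lemma e_conj (t : ℝ) : (starRingEnd ℂ) (e t) = e (-t) := by
  unfold e
  rw [← Complex.exp_conj]
  have : (starRingEnd ℂ) 2 = 2 := Complex.conj_ofReal 2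
  simp [this]

/-- summand -/
def gterm (Q : ℝ) (c : ℂ) (q : GaussianInt) : ℂ :=
  ((Real.exp (-Real.pi * gN q / (2 * Q)) : ℝ) : ℂ) * e ((c * (q : ℂ) ^ 2).re)

lemma gterm_summable (Q : ℝ) (hQ : 0 < Q) (c : ℂ) : Summable fun q => ‖gterm Q c q‖ := by
  refine (gN_summable (Real.pi / (2 * Q)) (by positivity)).congr fun q => ?_
  unfold gterm
  rw [norm_mul, e_norm, mul_one, Complex.norm_real, Real.norm_of_nonneg (Real.exp_pos _).le]
  congr 1; ring

lemma gterm_mul (Q : ℝ) (hQ : 0 < Q) (c : ℂ) (α q : GaussianInt) :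
    gterm Q c (q + α) * (starRingEnd ℂ) (gterm Q c q) =
      ((Real.exp (-Real.pi * gN α / (4 * Q)) : ℝ) : ℂ) *
      (Hterm Q α.re (2 * c * α).re q.re * Hterm Q α.im (-(2 * c * α).im) q.im) := by
  unfold gterm Hterm
  rw [map_mul, e_conj, Complex.conj_ofReal]
  unfold e
  simp only [Complex.ofReal_exp, ← Complex.exp_add]
  congr 1
  have h1 : (c * ((q + α : GaussianInt) : ℂ)^2).re - (c * (q : ℂ)^2).re =
     ((2 * c * α).re * (2 * q.re + α.re) - (2 * c * α).im * (2 * q.im + α.im)) / 2 := by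
    simp [pow_two]
    ring
  have h2 := congrArg (fun r : ℝ => (r : ℂ)) h1
  have h3 : -Real.pi * gN (q + α) / (2 * Q) + -Real.pi * gN q / (2 * Q) =
     -Real.pi * gN α / (4 * Q) + -Real.pi * (2 * q.re + α.re)^2 / (4 * Q)
      + -Real.pi * (2 * q.im + α.im)^2 / (4 * Q) := by
    unfold gN
    simp
    field_simp
    ring
  have h4 := congrArg (fun r : ℝ => (r : ℂ)) h3
  push_cast at h2 h4 ⊢
  linear_combination h4 + 2 * Real.pi * Complex.I * h2

/-- shear -/
def shear : GaussianInt × GaussianInt ≃ GaussianInt × GaussianInt where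
  toFun p := (p.2 + p.1, p.2)
  invFun p := (p.1 - p.2, p.2)
  left_inv p := by ext <;> simp
  right_inv p := by ext <;> simp

lemma shear_facts (f g : GaussianInt → ℂ) (hf : Summable fun q => ‖f q‖)
    (hg : Summable fun q => ‖g q‖) :
    (∑' q, f q) * (∑' q, g q) = ∑' α, ∑' q, f (q + α) * g q := by
  rw [tsum_mul_tsum_of_summable_norm hf hg, ← shear.tsum_eq]
  have h := summable_mul_of_summable_norm hf hg
  rw [← shear.summable_iff] at h
  rw [Summable.tsum_prod (f := fun p : GaussianInt × GaussianInt =>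
    f (shear p).1 * g (shear p).2) h]
  rfl

lemma main_in (Q : ℝ) (hQ : 0 < Q) (c : ℂ) (α : GaussianInt) :
      ‖∑' q, gterm Q c (q + α) * (starRingEnd ℂ) (gterm Q c q)‖ ≤
      Q * (Real.exp (-Real.pi * gN α / (4 * Q)) *
      ∑' β : GaussianInt, Real.exp (-Real.pi * Q *
        cN ((β : ℂ) - (starRingEnd ℂ) (2 * c * α)))) := by
  rw [tsum_congr (gterm_mul Q hQ c α)]
  rw [tsum_mul_left, g_tsum (Hterm_summable _ _ _ hQ) (Hterm_summable _ _ _ hQ), inner_eq Q hQ,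
      norm_mul, norm_mul, Complex.norm_real, Real.norm_of_nonneg (Real.exp_pos _).le]
  have b1 := Hterm_bound Q α.re (2 * c * α).re hQ
  have b2 := Hterm_bound Q α.im (-(2 * c * α).im) hQ
  have b3 := mul_le_mul b1 b2 (norm_nonneg _) ((norm_nonneg _).trans b1)
  refine (mul_le_mul_of_nonneg_left b3 (Real.exp_pos _).le).trans_eq ?_
  generalize (∑' n : ℤ, Real.exp (-(Real.pi * Q) * (n - (2 * c * α).re)^2)) = A
  generalize (∑' n : ℤ, Real.exp (-(Real.pi * Q) * (n - (-(2 * c * α).im))^2)) = B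
  generalize Real.exp (-Real.pi * gN α / (4 * Q)) = E
  linear_combination E * A * B * Real.mul_self_sqrt hQ.le

lemma main_c (Q : ℝ) (hQ : 0 < Q) (c : ℂ) :
    ‖∑' q, gterm Q c q‖ ^ 2 ≤ Q * ∑' α : GaussianInt, Real.exp (-Real.pi * gN α / (4 * Q)) *
      ∑' β : GaussianInt, Real.exp (-Real.pi * Q *
        cN ((β : ℂ) - (starRingEnd ℂ) (2 * c * α))) := by
  have hs := gterm_summable Q hQ c
  have hs' : Summable fun q => ‖(starRingEnd ℂ) (gterm Q c q)‖ := by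
    simpa using hs
  have hsq : (∑' q, gterm Q c q) * (starRingEnd ℂ) (∑' q, gterm Q c q) =
      ∑' α, ∑' q, gterm Q c (q + α) * (starRingEnd ℂ) (gterm Q c q) := by
    rw [Complex.conj_tsum]
    exact shear_facts _ _ hs hs'
  have hin := main_in Q hQ c
  obtain ⟨C, hC⟩ := theta_bound Q hQ
  have hpos : ∀ t : ℝ, 0 ≤ ∑' n : ℤ, Real.exp (-(Real.pi * Q) * (n - t)^2) :=
    fun t => tsum_nonneg fun n => (Real.exp_pos _).le
  have hR : Summable fun α : GaussianInt => Real.exp (-Real.pi * gN α / (4 * Q)) *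
      ∑' β : GaussianInt, Real.exp (-Real.pi * Q *
        cN ((β : ℂ) - (starRingEnd ℂ) (2 * c * α))) := by
    refine Summable.of_nonneg_of_le (fun α => ?_) (fun α => ?_)
      ((gN_summable (Real.pi / (4 * Q)) (by positivity)).mul_right (C * C))
    · exact mul_nonneg (Real.exp_pos _).le (tsum_nonneg fun n => (Real.exp_pos _).le)
    · rw [inner_eq Q hQ]
      refine mul_le_mul (le_of_eq ?_) ?_ (mul_nonneg (hpos _) (hpos _)) (Real.exp_pos _).le
      · congr 1; ring
      · exact mul_le_mul (hC _) (hC _) (hpos _) ((hpos 0).trans (hC 0))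
  have hR' := hR.mul_left Q
  have hL := Summable.of_nonneg_of_le (fun α => norm_nonneg _) hin hR'
  have hn : ‖∑' q, gterm Q c q‖ ^ 2 =
      ‖(∑' q, gterm Q c q) * (starRingEnd ℂ) (∑' q, gterm Q c q)‖ := by
    rw [norm_mul, RCLike.norm_conj, sq]
  rw [hn, hsq, ← tsum_mul_left]
  exact (norm_tsum_le_tsum_norm hL).trans (hL.tsum_le_tsum hin hR')

/-- **Weyl differencing and Poisson summation for the quadratic sum** (inequality (24) of
the paper). For `Q₀ > 0`, `q₁ ≠ 0` and `r₁, j ∈ ℤ[i]`,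
`|S(q₁,r₁,j)|² ≤ Q₀ ∑_{α ∈ ℤ[i]} exp(-π N(α)/(4Q₀))
   ∑_{β ∈ ℤ[i]} exp(-π Q₀ N(β - conj(2jα r₁/q₁²)))`. -/
theorem weyl_poisson_square (Q0 : ℝ) (hQ0 : 0 < Q0)
    (q1 : GaussianInt) (hq1 : q1 ≠ 0) (r1 j : GaussianInt) :
    ‖Ssum Q0 q1 r1 j‖ ^ 2
      ≤ Q0 * ∑' α : GaussianInt, Real.exp (-Real.pi * gN α / (4 * Q0)) *
          ∑' β : GaussianInt,
            Real.exp (-Real.pi * Q0 *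
              cN ((β : ℂ) - (starRingEnd ℂ) (2 * (j : ℂ) * (α : ℂ) * (r1 : ℂ) / (q1 : ℂ) ^ 2))) := by
  have h := main_c Q0 hQ0 ((j : ℂ) * (r1 : ℂ) / (q1 : ℂ) ^ 2)
  have e1 : Ssum Q0 q1 r1 j = ∑' q, gterm Q0 ((j : ℂ) * (r1 : ℂ) / (q1 : ℂ) ^ 2) q := by
    unfold Ssum gterm
    refine tsum_congr fun q => ?_
    rw [div_mul_eq_mul_div]
  have e2 : ∀ α : GaussianInt, 2 * (j : ℂ) * (α : ℂ) * (r1 : ℂ) / (q1 : ℂ) ^ 2 =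
      2 * ((j : ℂ) * (r1 : ℂ) / (q1 : ℂ) ^ 2) * α := fun α => by ring
  simp_rw [e1, e2]
  exact h
end
end
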